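/- There is a universal constant C > 0 such that for all R, t ∈ ℕ and every function A : F₃^R → ℂ with Â(α) = 0 for all α ∈ F₃^R with |α| > t, one has ‖A‖₄ ≤ C^t·‖A‖₂. -/

import Mathlib

open scoped BigOperators

abbrev F3 := ZMod 3

noncomputable def ω : ℂ := Complex.exp (2 * (Real.pi : ℂ) * Complex.I / 3)

/-- The character `χ_α(f) = ω^{Σ_i α_i f_i}` on `F₃^R`. -/
noncomputable def chiV {R : ℕ} (α f : Fin R → F3) : ℂ := ω ^ (∑ i, α i * f i).val

/-- Support size `|α|`. -/
def suppV {R : ℕ} (α : Fin R → F3) : ℕ := (Finset.univ.filter fun i => α i ≠ 0).card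

/-- Fourier coefficient `Â(α) = E_f[A(f)·conj(χ_α(f))]`. -/
noncomputable def fourierV {R : ℕ} (A : (Fin R → F3) → ℂ) (α : Fin R → F3) : ℂ :=
  (∑ f, A f * (starRingEnd ℂ) (chiV α f)) / (3 : ℂ) ^ R

/-- Expectation over the uniform distribution on `F₃^R`. -/
noncomputable def expV {R : ℕ} (A : (Fin R → F3) → ℝ) : ℝ := (∑ f, A f) / 3 ^ R

/-- Degree-`k` influence `Inf_x^{≤k}(A)`. -/
noncomputable def infV {R : ℕ} (k : ℕ) (A : (Fin R → F3) → ℝ) (x : Fin R) : ℝ :=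
  ∑ α ∈ Finset.univ.filter (fun α : Fin R → F3 => α x ≠ 0 ∧ suppV α ≤ k),
    ‖fourierV (fun f => (A f : ℂ)) α‖ ^ 2

/-- `L^q` norm `(E_f |A(f)|^q)^{1/q}` of a function on `F₃^R`. -/
noncomputable def normqV {R : ℕ} (q : ℝ) (A : (Fin R → F3) → ℂ) : ℝ :=
  ((∑ f, ‖A f‖ ^ q) / 3 ^ R) ^ (1 / q)


lemma omega_cube : ω ^ 3 = 1 := by
  unfold ω
  rw [← Complex.exp_nat_mul]
  convert Complex.exp_two_pi_mul_I using 2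
  push_cast
  ring

lemma omega_prim : IsPrimitiveRoot ω 3 := by
  have := Complex.isPrimitiveRoot_exp 3 (by norm_num)
  simpa [ω] using this

lemma omega_sum : 1 + ω + ω ^ 2 = 0 := by
  have h := omega_prim.geom_sum_eq_zero (by norm_num)
  simpa [Finset.sum_range_succ] using h

lemma conj_omega : (starRingEnd ℂ) ω = ω ^ 2 := by
  have h1 : ‖ω‖ = 1 := omega_prim.norm'_eq_one (by norm_num)
  have h2 : (starRingEnd ℂ) ω * ω = 1 := by
    rw [mul_comm, Complex.mul_conj, Complex.normSq_eq_norm_sq, h1]; simp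
  calc (starRingEnd ℂ) ω = (starRingEnd ℂ) ω * ω ^ 3 := by rw [omega_cube, mul_one]
    _ = ((starRingEnd ℂ) ω * ω) * ω ^ 2 := by ring
    _ = ω ^ 2 := by rw [h2, one_mul]

lemma omega_val_add (a b : F3) : ω ^ (a + b).val = ω ^ a.val * ω ^ b.val := by
  rw [ZMod.val_add, ← pow_add]
  exact (pow_eq_pow_mod _ omega_cube).symm

lemma chiV_cons {R : ℕ} (a x : F3) (α f : Fin R → F3) :
    chiV (Fin.cons a α : Fin (R+1) → F3) (Fin.cons x f : Fin (R+1) → F3)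
      = ω ^ (a * x).val * chiV α f := by
  unfold chiV
  rw [Fin.sum_univ_succ, omega_val_add]
  simp

lemma sum_cons {M : Type*} [AddCommMonoid M] {R : ℕ} (g : (Fin (R+1) → F3) → M) :
    ∑ f, g f = ∑ x : F3, ∑ f : Fin R → F3, g (Fin.cons x f : Fin (R+1) → F3) := by
  rw [← Fintype.sum_prod_type']
  exact (Fintype.sum_equiv (Fin.consEquiv (fun _ : Fin (R+1) => F3)) _ _ (fun _ => rfl)).symm

lemma sum_F3 {M : Type*} [AddCommMonoid M] (g : F3 → M) : ∑ x, g x = g 0 + g 1 + g 2 :=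
  Fin.sum_univ_three g

lemma suppV_cons {R : ℕ} (a : F3) (α : Fin R → F3) :
    suppV (Fin.cons a α : Fin (R+1) → F3) = (if a ≠ 0 then 1 else 0) + suppV α := by
  unfold suppV
  simp only [Finset.card_filter]
  rw [Fin.sum_univ_succ]
  simp

/-- slice -/
def slc {R : ℕ} (A : (Fin (R+1) → F3) → ℂ) (x : F3) : (Fin R → F3) → ℂ :=
  fun f => A (Fin.cons x f : Fin (R+1) → F3)

lemma fourierV_cons {R : ℕ} (A : (Fin (R+1) → F3) → ℂ) (a : F3) (α : Fin R → F3) :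
    3 * fourierV A (Fin.cons a α : Fin (R+1) → F3)
      = ∑ x, (starRingEnd ℂ) (ω ^ (a * x).val) * fourierV (slc A x) α := by
  unfold fourierV
  rw [sum_cons]
  simp only [chiV_cons, map_mul, ← mul_div_assoc, ← Finset.sum_div, Finset.mul_sum, slc]
  rw [pow_succ]
  have h : (3:ℂ)^R ≠ 0 := pow_ne_zero _ (by norm_num)
  field_simp
  rw [Finset.mul_sum]
  refine Finset.sum_congr rfl fun x _ => ?_
  rw [Finset.mul_sum]
  exact Finset.sum_congr rfl fun f _ => by ring

lemma fourierV_sub {R : ℕ} (A B : (Fin R → F3) → ℂ) (α) :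
    fourierV (fun f => A f - B f) α = fourierV A α - fourierV B α := by
  unfold fourierV
  simp only [sub_mul, Finset.sum_sub_distrib, sub_div]

/-- average -/
noncomputable def avg {R : ℕ} (A : (Fin (R+1) → F3) → ℂ) : (Fin R → F3) → ℂ :=
  fun f => (slc A 0 f + slc A 1 f + slc A 2 f) / 3

lemma fourierV_avg' {R : ℕ} (A : (Fin (R+1) → F3) → ℂ) (α) :
    fourierV (avg A) α =
      (fourierV (slc A 0) α + fourierV (slc A 1) α + fourierV (slc A 2) α) / 3 := by
  unfold fourierV avg
  rw [← add_div, ← add_div, ← Finset.sum_add_distrib, ← Finset.sum_add_distrib]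
  conv_rhs => rw [div_right_comm, Finset.sum_div]
  congr 1
  refine Finset.sum_congr rfl fun x _ => ?_
  ring

lemma fourierV_avg {R : ℕ} (A : (Fin (R+1) → F3) → ℂ) (α) :
    fourierV (avg A) α = fourierV A (Fin.cons 0 α : Fin (R+1) → F3) := by
  have h := fourierV_cons A 0 α
  rw [sum_F3] at h
  simp at h
  rw [fourierV_avg', ← h]
  ring

lemma fourier_slc_eq {R : ℕ} (A : (Fin (R+1) → F3) → ℂ) (α : Fin R → F3)
    (h : ∀ a : F3, a ≠ 0 → fourierV A (Fin.cons a α : Fin (R+1) → F3) = 0) (x : F3) :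
    fourierV (slc A x) α = fourierV (avg A) α := by
  have h1 := fourierV_cons A 1 α
  have h2 := fourierV_cons A 2 α
  rw [h 1 (by decide), sum_F3] at h1
  rw [h 2 (by decide), sum_F3] at h2
  have v0 : ((1 * 0 : F3)).val = 0 := by decide
  have v1 : ((1 * 1 : F3)).val = 1 := by decide
  have v2 : ((1 * 2 : F3)).val = 2 := by decide
  have w0 : ((2 * 0 : F3)).val = 0 := by decide
  have w1 : ((2 * 1 : F3)).val = 2 := by decide
  have w2 : ((2 * 2 : F3)).val = 1 := by decide
  rw [v0, v1, v2] at h1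
  rw [w0, w1, w2] at h2
  simp only [map_pow, conj_omega] at h1 h2
  rw [fourierV_avg']
  set g0 := fourierV (slc A 0) α with hg0
  set g1 := fourierV (slc A 1) α with hg1
  set g2 := fourierV (slc A 2) α with hg2
  have c := omega_cube
  have s := omega_sum
  have h1' : g0 + ω^2 * g1 + ω * g2 = 0 := by linear_combination -h1 - ω * g2 * c
  have h2' : g0 + ω * g1 + ω^2 * g2 = 0 := by linear_combination -h2 - ω * g1 * c
  have e1 : g1 = g2 := by
    have : 3 * (g1 - g2) = 0 := by
      linear_combination (ω - ω^2) * (h1' - h2') + (g1 - g2) * s + (g1 - g2) * (ω - 2) * c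
    have h3 : g1 - g2 = 0 := by simpa using this
    exact sub_eq_zero.mp h3
  have e0 : g0 = g2 := by
    rw [e1] at h1'
    linear_combination h1' - g2 * s
  have key : x = 0 ∨ x = 1 ∨ x = 2 := by revert x; decide
  rcases key with rfl | rfl | rfl
  · rw [← hg0, e0, e1]; ring
  · rw [← hg1, e0, e1]; ring
  · rw [← hg2, e0, e1]; ring

lemma all_zero : ∀ (R : ℕ) (A : (Fin R → F3) → ℂ), (∀ α, fourierV A α = 0) → ∀ f, A f = 0 := by
  intro R
  induction R with
  | zero =>
    intro A h f
    have := h f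
    unfold fourierV at this
    rw [Fintype.sum_subsingleton _ f] at this
    simpa [chiV] using this
  | succ R ih =>
    intro A h f
    have := ih (slc A (f 0)) (fun α => by
      rw [fourier_slc_eq A α (fun a _ => h _), fourierV_avg, h]) (Fin.tail f)
    simpa [slc] using this

lemma ptwise (b d : ℂ) : ‖b + d‖ ^ 4 ≤ ‖b‖^4 + 8 * (‖b‖^2 * ‖d‖^2) + 3 * ‖d‖^4
    + 4 * ‖b‖^2 * (b.re * d.re + b.im * d.im) := by
  have e (z : ℂ) : ‖z‖^4 = (z.re^2 + z.im^2)^2 := by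
    rw [show ‖z‖^4 = (‖z‖^2)^2 by ring, ← Complex.normSq_eq_norm_sq, Complex.normSq_apply]; ring
  have e2 (z : ℂ) : ‖z‖^2 = z.re^2 + z.im^2 := by
    rw [← Complex.normSq_eq_norm_sq, Complex.normSq_apply]; ring
  rw [e, e, e, e2, e2, Complex.add_re, Complex.add_im]
  nlinarith [sq_nonneg (b.re * d.re + b.im * d.im - (d.re^2 + d.im^2)),
    sq_nonneg (b.re * d.im - b.im * d.re)]

lemma sq_split (b d : ℂ) : ‖b + d‖ ^ 2 = ‖b‖^2 + ‖d‖^2 + 2 * (b.re * d.re + b.im * d.im) := by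
  simp only [← Complex.normSq_eq_norm_sq, Complex.normSq_apply, Complex.add_re, Complex.add_im]
  ring

/-- deviation from the average -/
noncomputable def dev {R : ℕ} (A : (Fin (R+1) → F3) → ℂ) (x : F3) : (Fin R → F3) → ℂ :=
  fun f => slc A x f - avg A f

lemma dev_sum {R : ℕ} (A : (Fin (R+1) → F3) → ℂ) (f) :
    dev A 0 f + dev A 1 f + dev A 2 f = 0 := by
  unfold dev avg; ring

lemma slc_eq {R : ℕ} (A : (Fin (R+1) → F3) → ℂ) (x f) : slc A x f = avg A f + dev A x f := by
  unfold dev; ring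

lemma four_le {R : ℕ} (A : (Fin (R+1) → F3) → ℂ) :
    ∑ f, ‖A f‖^4 ≤ 3 * ∑ f, ‖avg A f‖^4
      + 8 * ((∑ f, ‖avg A f‖^2 * ‖dev A 0 f‖^2) + (∑ f, ‖avg A f‖^2 * ‖dev A 1 f‖^2)
        + ∑ f, ‖avg A f‖^2 * ‖dev A 2 f‖^2)
      + 3 * ((∑ f, ‖dev A 0 f‖^4) + (∑ f, ‖dev A 1 f‖^4) + ∑ f, ‖dev A 2 f‖^4) := by
  rw [sum_cons, sum_F3]
  simp only [Finset.mul_sum, ← Finset.sum_add_distrib]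
  refine Finset.sum_le_sum fun f _ => ?_
  change ‖slc A 0 f‖^4 + ‖slc A 1 f‖^4 + ‖slc A 2 f‖^4 ≤ _
  have h := dev_sum A f
  have hr := congrArg Complex.re h
  have hi := congrArg Complex.im h
  simp only [Complex.add_re, Complex.add_im, Complex.zero_re, Complex.zero_im] at hr hi
  rw [slc_eq, slc_eq, slc_eq]
  have p0 := ptwise (avg A f) (dev A 0 f)
  have p1 := ptwise (avg A f) (dev A 1 f)
  have p2 := ptwise (avg A f) (dev A 2 f)
  linear_combination p0 + p1 + p2 + 4 * ‖avg A f‖^2 * ((avg A f).re * hr + (avg A f).im * hi)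

lemma two_eq {R : ℕ} (A : (Fin (R+1) → F3) → ℂ) :
    ∑ f, ‖A f‖^2 = 3 * ∑ f, ‖avg A f‖^2
      + ((∑ f, ‖dev A 0 f‖^2) + (∑ f, ‖dev A 1 f‖^2) + ∑ f, ‖dev A 2 f‖^2) := by
  rw [sum_cons, sum_F3]
  simp only [Finset.mul_sum, ← Finset.sum_add_distrib]
  refine Finset.sum_congr rfl fun f _ => ?_
  change ‖slc A 0 f‖^2 + ‖slc A 1 f‖^2 + ‖slc A 2 f‖^2 = _
  have h := dev_sum A f
  have hr := congrArg Complex.re h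
  have hi := congrArg Complex.im h
  simp only [Complex.add_re, Complex.add_im, Complex.zero_re, Complex.zero_im] at hr hi
  rw [slc_eq, slc_eq, slc_eq, sq_split, sq_split, sq_split]
  linear_combination 2 * ((avg A f).re * hr + (avg A f).im * hi)

lemma cs_bound {R : ℕ} (B D : (Fin R → F3) → ℂ) (k : ℝ) (hk : 0 ≤ k)
    (hB : 3^R * ∑ f, ‖B f‖^4 ≤ 16 * k * (∑ f, ‖B f‖^2)^2)
    (hD : 3^R * ∑ f, ‖D f‖^4 ≤ k * (∑ f, ‖D f‖^2)^2) :
    3^R * ∑ f, ‖B f‖^2 * ‖D f‖^2 ≤ 4 * k * ((∑ f, ‖B f‖^2) * ∑ f, ‖D f‖^2) := by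
  have cs := Finset.sum_mul_sq_le_sq_mul_sq Finset.univ (fun f => ‖B f‖^2) (fun f => ‖D f‖^2)
  simp only [← pow_mul] at cs
  norm_num at cs
  have hb : 0 ≤ ∑ f, ‖B f‖^2 := by positivity
  have hd : 0 ≤ ∑ f, ‖D f‖^2 := by positivity
  refine le_of_sq_le_sq ?_ (by positivity)
  have h1 := mul_le_mul hB hD (by positivity) (by positivity)
  have h2 := mul_le_mul_of_nonneg_left cs (show (0:ℝ) ≤ (3^R)^2 by positivity)
  linear_combination h1 + h2

lemma main_ineq : ∀ (R t : ℕ) (A : (Fin R → F3) → ℂ),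
    (∀ α : Fin R → F3, t < suppV α → fourierV A α = 0) →
    3^R * ∑ f, ‖A f‖^4 ≤ 16^t * (∑ f, ‖A f‖^2)^2 := by
  intro R
  induction R with
  | zero =>
    intro t A _
    rw [Fintype.sum_subsingleton _ (0 : Fin 0 → F3), Fintype.sum_subsingleton _ (0 : Fin 0 → F3)]
    have : (1:ℝ) ≤ 16^t := one_le_pow₀ (by norm_num)
    have := mul_le_mul_of_nonneg_right this (show 0 ≤ (‖A 0‖^2)^2 by positivity)
    linear_combination this
  | succ R ih =>
    intro t A h
    have hB := ih t (avg A) (fun α hα => by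
      rw [fourierV_avg]; exact h _ (by rw [suppV_cons]; simpa using hα))
    have hDf (x : F3) (α : Fin R → F3) (hα : t < 1 + suppV α) : fourierV (dev A x) α = 0 := by
      unfold dev
      rw [fourierV_sub, fourier_slc_eq A α _ x, sub_self]
      intro a ha
      exact h _ (by rw [suppV_cons]; simpa [ha] using hα)
    have f4 := four_le A
    have t2 := two_eq A
    have hb : 0 ≤ ∑ f, ‖avg A f‖^2 := by positivity
    cases t with
    | zero =>
      have hz (x : F3) (f) : dev A x f = 0 := all_zero R _ (fun α => hDf x α (by omega)) f
      simp only [hz] at f4 t2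
      simp at f4 t2
      rw [t2, pow_succ]
      have := mul_le_mul_of_nonneg_left f4 (show (0:ℝ) ≤ 3^R by positivity)
      linear_combination 3 * this + 9 * hB
    | succ s =>
      have hD (x : F3) := ih s (dev A x) (fun α hα => hDf x α (by omega))
      have hk : (0:ℝ) ≤ 16^s := by positivity
      have hC (x : F3) := cs_bound (avg A) (dev A x) (16^s) hk
        (by rw [pow_succ] at hB; linear_combination hB) (hD x)
      have d0 : 0 ≤ ∑ f, ‖dev A 0 f‖^2 := by positivity
      have d1 : 0 ≤ ∑ f, ‖dev A 1 f‖^2 := by positivity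
      have d2 : 0 ≤ ∑ f, ‖dev A 2 f‖^2 := by positivity
      have := mul_le_mul_of_nonneg_left f4 (show (0:ℝ) ≤ 3^R by positivity)
      have D0 := hD 0
      have D1 := hD 1
      have D2 := hD 2
      have C0 := hC 0
      have C1 := hC 1
      have C2 := hC 2
      rw [t2, pow_succ, pow_succ]
      rw [pow_succ] at hB
      generalize (∑ f, ‖dev A 0 f‖^2) = a0 at *
      generalize (∑ f, ‖dev A 1 f‖^2) = a1 at *
      generalize (∑ f, ‖dev A 2 f‖^2) = a2 at *
      generalize (∑ f, ‖avg A f‖^2) = b at *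
      have e : 0 ≤ (16:ℝ)^s * (7 * (a0^2 + a1^2 + a2^2) + 32 * (a0*a1 + a0*a2+a1*a2)) := by
        positivity
      linear_combination 3 * this + 9 * hB + 24 * (C0 + C1 + C2) + 9 * (D0 + D1 + D2) + e

/-- Hypercontractivity on the full cube (Lemma 3.2): there is a universal `C` such that any
function on `F₃^R` with Fourier support on levels at most `t` satisfies
`‖A‖₄ ≤ C^t ‖A‖₂`. -/
theorem stmt11 :
    ∃ C : ℝ, 0 < C ∧
      ∀ R t : ℕ, ∀ A : (Fin R → F3) → ℂ,
        (∀ α : Fin R → F3, t < suppV α → fourierV A α = 0) →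
        normqV 4 A ≤ C ^ t * normqV 2 A := by
  refine ⟨2, by norm_num, fun R t A h => ?_⟩
  have key := main_ineq R t A h
  unfold normqV
  have e4 : ∑ f, ‖A f‖ ^ (4:ℝ) = ∑ f, ‖A f‖^4 :=
    Finset.sum_congr rfl fun f _ => by exact_mod_cast Real.rpow_natCast ‖A f‖ 4
  have e2 : ∑ f, ‖A f‖ ^ (2:ℝ) = ∑ f, ‖A f‖^2 :=
    Finset.sum_congr rfl fun f _ => by exact_mod_cast Real.rpow_natCast ‖A f‖ 2
  rw [e4, e2]
  set X := ∑ f, ‖A f‖^4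
  set Y := ∑ f, ‖A f‖^2
  have hX : 0 ≤ X := by positivity
  have hY : 0 ≤ Y := by positivity
  have hN : (0:ℝ) < 3^R := by positivity
  have h0 : 0 ≤ X / 3^R := by positivity
  have h1 : 0 ≤ Y / 3^R := by positivity
  have h2 : X / 3^R ≤ 16^t * (Y/3^R)^2 := by
    rw [div_pow, ← mul_div_assoc, div_le_div_iff₀ hN (by positivity)]
    have := mul_le_mul_of_nonneg_left key hN.le
    linear_combination this
  refine le_of_pow_le_pow_left₀ (n := 4) (by norm_num) (by positivity) ?_
  have e : ((X / 3^R) ^ (1/(4:ℝ)))^4 = X / 3^R := by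
    rw [← Real.rpow_natCast, ← Real.rpow_mul h0]; norm_num
  have e' : ((Y / 3^R) ^ (1/(2:ℝ)))^2 = Y / 3^R := by
    rw [← Real.rpow_natCast, ← Real.rpow_mul h1]; norm_num
  rw [e, mul_pow, show ((Y / 3^R) ^ (1/(2:ℝ)))^4 = (((Y / 3^R) ^ (1/(2:ℝ)))^2)^2 by ring, e',
    ← pow_mul, mul_comm t 4, pow_mul]
  norm_num
  exact h2
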